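/- In the capacitated repeated stochastic matching model with arbitrary positive integer vertex capacities, for every capacitated stable matching process SM (i.e., for every tie-breaking rule in the greedy step), every online algorithm ALG, and all nonnegative round weights w_1, …, w_T, the expected reward of SM is at least 1/11 times the expected reward of ALG. -/

import Mathlib

open Finset

/-- A finite simple graph presented via an abstract edge type: each edge has a
set of exactly two endpoints, and distinct edges have distinct endpoint sets. -/
structure GraphEdges (V E : Type) where
  ends : E → Finset V
  card_ends : ∀ e, (ends e).card = 2
  ends_injective : Function.Injective ends

variable {V E : Type}

/-- A capacitated matching: each vertex `v` is incident to at most `C v`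
of its edges. -/
def GraphEdges.IsCapMatching [DecidableEq V] (G : GraphEdges V E) (C : V → ℕ)
    (M : Finset E) : Prop :=
  ∀ v, (M.filter (fun e => v ∈ G.ends e)).card ≤ C v

/-- `select` is an online algorithm in the capacitated model: under each
realization `ω` it selects a capacitated matching in every round, and its
round-`t` selection depends only on its own selections in earlier rounds and
on the realized values of the edges it selected in those rounds. -/
def GraphEdges.IsOnlineCap [DecidableEq V] (G : GraphEdges V E) (C : V → ℕ)
    (select : (E → Bool) → ℕ → Finset E) : Prop :=
  (∀ ω t, G.IsCapMatching C (select ω t)) ∧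
  (∀ ω ω' t, (∀ s, s < t → ∀ e ∈ select ω s, ω' e = ω e) → select ω' t = select ω t)

/-- Probability of the sample graph `ω` under independent Bernoulli edges. -/
def probOf [Fintype E] (p : E → ℝ) (ω : E → Bool) : ℝ :=
  ∏ e : E, if ω e then p e else 1 - p e

/-- Expected reward of an algorithm: the `w`-weighted expected number of
successful selected edges over rounds `0, …, T-1`. -/
noncomputable def expectedReward [Fintype E] [DecidableEq E] (p : E → ℝ) (w : ℕ → ℝ)
    (T : ℕ) (select : (E → Bool) → ℕ → Finset E) : ℝ :=
  ∑ ω : E → Bool, probOf p ω *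
    ∑ t ∈ Finset.range T, w t * ((select ω t).filter (fun e => ω e)).card

/-- Edges selected by `select` in rounds before `t` under realization `ω`. -/
def selectedBefore [DecidableEq E] (select : (E → Bool) → ℕ → Finset E)
    (ω : E → Bool) (t : ℕ) : Finset E :=
  (Finset.range t).biUnion (select ω)

/-- An edge `f` is available for the greedy step, given the dead (previously
selected and revealed unsuccessful) edges `D` and the current partial
capacitated matching `M`: it is not dead, not already in `M`, and can be added
to `M` without violating any vertex capacity. -/
def GraphEdges.AvailCap [DecidableEq V] [DecidableEq E] (G : GraphEdges V E) (C : V → ℕ)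
    (D M : Finset E) (f : E) : Prop :=
  f ∉ D ∧ f ∉ M ∧ G.IsCapMatching C (insert f M)

/-- `L` records, in order, the edges added by a run of the greedy procedure
extending the committed capacitated matching `A`, avoiding dead edges `D`:
each added edge is available (w.r.t. the edge set built so far) of maximum
probability, and at the end no available edge remains. -/
def GraphEdges.IsGreedyRunCap [DecidableEq V] [DecidableEq E] (G : GraphEdges V E)
    (C : V → ℕ) (p : E → ℝ) (D A : Finset E) (L : List E) : Prop :=
  (∀ i : Fin L.length,
      G.AvailCap C D (A ∪ (L.take i).toFinset) (L.get i) ∧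
      ∀ f, G.AvailCap C D (A ∪ (L.take i).toFinset) f → p f ≤ p (L.get i)) ∧
  (∀ f, ¬ G.AvailCap C D (A ∪ L.toFinset) f)

/-- `select` is a capacitated stable matching process: an online algorithm
which in each round keeps all previously selected successful edges and
augments them greedily (ties broken arbitrarily). -/
def GraphEdges.IsSMCap [DecidableEq V] [DecidableEq E] (G : GraphEdges V E)
    (C : V → ℕ) (p : E → ℝ) (select : (E → Bool) → ℕ → Finset E) : Prop :=
  G.IsOnlineCap C select ∧
  ∀ ω t,
    ∃ L : List E,
      G.IsGreedyRunCap C p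
        ((selectedBefore select ω t).filter (fun e => ¬ ω e))
        ((selectedBefore select ω t).filter (fun e => ω e)) L ∧
      select ω t = (selectedBefore select ω t).filter (fun e => ω e) ∪ L.toFinset

/-- Factor of the probability outside the edge `e`. -/
noncomputable def restProb [Fintype E] [DecidableEq E] (p : E → ℝ) (e : E) (ω : E → Bool) : ℝ :=
  ∏ f ∈ univ.erase e, if ω f then p f else 1 - p f

lemma probOf_eq_restProb [Fintype E] [DecidableEq E] (p : E → ℝ) (e : E) (ω : E → Bool) :
    probOf p ω = (if ω e then p e else 1 - p e) * restProb p e ω := by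
  unfold probOf restProb
  rw [Finset.mul_prod_erase univ (fun f => if ω f then p f else 1 - p f) (mem_univ e)]

lemma probOf_nonneg [Fintype E] (p : E → ℝ) (hp : ∀ e, 0 ≤ p e ∧ p e ≤ 1) (ω : E → Bool) :
    0 ≤ probOf p ω := by
  unfold probOf
  apply Finset.prod_nonneg
  intro e _
  have := hp e
  split_ifs <;> linarith

lemma restProb_update [Fintype E] [DecidableEq E] (p : E → ℝ) (e : E) (ω : E → Bool) (b : Bool) :
    restProb p e (Function.update ω e b) = restProb p e ω := by
  unfold restProb
  apply Finset.prod_congr rfl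
  intro f hf
  rw [Function.update_of_ne (Finset.ne_of_mem_erase hf)]

/-- Independence: a function not depending on `ω e`. -/
lemma sum_indep [Fintype E] [DecidableEq E] (p : E → ℝ) (e : E) (F : (E → Bool) → ℝ)
    (hF : ∀ ω b, F (Function.update ω e b) = F ω) :
    ∑ ω : E → Bool, probOf p ω * (if ω e then F ω else 0) =
      ∑ ω : E → Bool, probOf p ω * (F ω * p e) := by
  have flip : ∑ ω : E → Bool, (if ω e then restProb p e ω * F ω else 0) =
      ∑ ω : E → Bool, (if ω e then 0 else restProb p e ω * F ω) := by
    refine Finset.sum_bij' (fun ω _ => Function.update ω e (!ω e))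
      (fun ω _ => Function.update ω e (!ω e)) (by simp) (by simp) ?_ ?_ ?_
    · intro ω _; simp
    · intro ω _; simp
    · intro ω _
      rw [restProb_update, hF]
      cases h : ω e <;> simp
  have h1 : ∑ ω : E → Bool, probOf p ω * (if ω e then F ω else 0) =
      p e * ∑ ω : E → Bool, (if ω e then restProb p e ω * F ω else 0) := by
    rw [Finset.mul_sum]
    apply Finset.sum_congr rfl
    intro ω _
    rw [probOf_eq_restProb p e]
    split_ifs <;> ring
  have h2 : ∑ ω : E → Bool, probOf p ω * (F ω * p e) =
      p e * (p e * ∑ ω : E → Bool, (if ω e then restProb p e ω * F ω else 0)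
       + (1 - p e) * ∑ ω : E → Bool, (if ω e then 0 else restProb p e ω * F ω)) := by
    rw [Finset.mul_sum, Finset.mul_sum, ← Finset.sum_add_distrib, Finset.mul_sum]
    apply Finset.sum_congr rfl
    intro ω _
    rw [probOf_eq_restProb p e]
    split_ifs <;> ring
  rw [h1, h2, ← flip]
  ring

lemma sum_card_indep [Fintype E] [DecidableEq E] (p : E → ℝ) (X : (E → Bool) → Finset E)
    (hX : ∀ ω e b, e ∈ X ω → e ∈ X (Function.update ω e b)) :
    ∑ ω : E → Bool, probOf p ω * (((X ω).filter (fun e => ω e)).card : ℝ) =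
      ∑ ω : E → Bool, probOf p ω * ∑ e ∈ X ω, p e := by
  have hiff : ∀ ω e b, (e ∈ X (Function.update ω e b) ↔ e ∈ X ω) := by
    intro ω e b
    refine ⟨fun h => ?_, hX ω e b⟩
    have := hX _ e (ω e) h
    simpa using this
  have h1 : ∀ ω : E → Bool, (((X ω).filter (fun e => ω e)).card : ℝ) =
      ∑ e : E, (if ω e then (if e ∈ X ω then (1 : ℝ) else 0) else 0) := by
    intro ω
    rw [Finset.card_filter, ← Finset.sum_filter_add_sum_filter_not univ (fun e => e ∈ X ω)]
    have h0 : ∑ e ∈ univ.filter (fun e => e ∉ X ω),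
        (if ω e then (if e ∈ X ω then (1 : ℝ) else 0) else 0) = 0 := by
      apply Finset.sum_eq_zero
      intro e he
      simp at he
      simp [he]
    rw [h0, add_zero, Finset.filter_mem_eq_inter, Finset.univ_inter]
    push_cast
    apply Finset.sum_congr rfl
    intro e he
    simp [he]
  have h2 : ∀ ω : E → Bool, ∑ e ∈ X ω, p e =
      ∑ e : E, (if e ∈ X ω then (1 : ℝ) else 0) * p e := by
    intro ω
    simp [ite_mul]
  simp_rw [h1, h2, Finset.mul_sum]
  rw [Finset.sum_comm]
  conv_rhs => rw [Finset.sum_comm]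
  apply Finset.sum_congr rfl
  intro e _
  apply sum_indep p e (fun ω => if e ∈ X ω then (1 : ℝ) else 0)
  intro ω b
  simp only [hiff]

/-- Edges newly selected in round `s`. -/
def newEdges [DecidableEq E] (select : (E → Bool) → ℕ → Finset E)
    (ω : E → Bool) (s : ℕ) : Finset E :=
  select ω s \ selectedBefore select ω s

lemma mem_selectedBefore [DecidableEq E] (select : (E → Bool) → ℕ → Finset E)
    (ω : E → Bool) (t : ℕ) (e : E) :
    e ∈ selectedBefore select ω t ↔ ∃ s < t, e ∈ select ω s := by
  simp [selectedBefore]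

lemma online_update [DecidableEq V] [DecidableEq E] {G : GraphEdges V E} {C : V → ℕ}
    {select : (E → Bool) → ℕ → Finset E} (h : G.IsOnlineCap C select)
    (ω : E → Bool) (e : E) (b : Bool) (s : ℕ) (he : e ∉ selectedBefore select ω s) :
    ∀ r ≤ s, select (Function.update ω e b) r = select ω r := by
  intro r hr
  apply h.2
  intro s' hs' f hf
  apply Function.update_of_ne
  rintro rfl
  exact he ((mem_selectedBefore _ _ _ _).2 ⟨s', by omega, hf⟩)

lemma online_update_before [DecidableEq V] [DecidableEq E] {G : GraphEdges V E} {C : V → ℕ}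
    {select : (E → Bool) → ℕ → Finset E} (h : G.IsOnlineCap C select)
    (ω : E → Bool) (e : E) (b : Bool) (s : ℕ) (he : e ∉ selectedBefore select ω s) :
    selectedBefore select (Function.update ω e b) s = selectedBefore select ω s := by
  unfold selectedBefore
  apply Finset.biUnion_congr rfl
  intro r hr
  exact online_update h ω e b s he r (Finset.mem_range.1 hr).le

lemma online_update_new [DecidableEq V] [DecidableEq E] {G : GraphEdges V E} {C : V → ℕ}
    {select : (E → Bool) → ℕ → Finset E} (h : G.IsOnlineCap C select)
    (ω : E → Bool) (e : E) (b : Bool) (s : ℕ) (he : e ∉ selectedBefore select ω s) :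
    newEdges select (Function.update ω e b) s = newEdges select ω s := by
  unfold newEdges
  rw [online_update_before h ω e b s he, online_update h ω e b s he s le_rfl]

/-- Double counting. -/
lemma sum_vertices [DecidableEq V] [Fintype E] [DecidableEq E] (G : GraphEdges V E)
    (S : Finset E) (g : E → ℝ) :
    ∑ v ∈ univ.biUnion G.ends, ∑ e ∈ S.filter (fun e => v ∈ G.ends e), g e =
      2 * ∑ e ∈ S, g e := by
  simp_rw [Finset.sum_filter]
  rw [Finset.sum_comm, Finset.mul_sum]
  apply Finset.sum_congr rfl
  intro e _
  rw [← Finset.sum_filter, Finset.sum_const]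
  have : (univ.biUnion G.ends).filter (fun v => v ∈ G.ends e) = G.ends e := by
    ext v
    simp only [mem_filter, mem_biUnion, mem_univ, true_and]
    exact ⟨fun h => h.2, fun h => ⟨⟨e, h⟩, h⟩⟩
  rw [this, G.card_ends]
  simp

/-- Blocking lemma for a greedy run. -/
lemma greedy_block [DecidableEq V] [DecidableEq E] (G : GraphEdges V E) (C : V → ℕ)
    (p : E → ℝ) (D A : Finset E) (L : List E) (hL : G.IsGreedyRunCap C p D A L)
    (hM : G.IsCapMatching C (A ∪ L.toFinset)) (e : E) (heD : e ∉ D) (heM : e ∉ A ∪ L.toFinset) :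
    ∃ v ∈ G.ends e, C v ≤ ((A ∪ L.toFinset).filter (fun f => v ∈ G.ends f)).card ∧
      ∀ f ∈ L, v ∈ G.ends f → p e ≤ p f := by
  classical
  have hex : ∃ j, ¬ G.AvailCap C D (A ∪ (L.take j).toFinset) e :=
    ⟨L.length, by simpa using hL.2 e⟩
  set j := Nat.find hex with hj
  have hjn : ¬ G.AvailCap C D (A ∪ (L.take j).toFinset) e := Nat.find_spec hex
  have hjm : ∀ i < j, G.AvailCap C D (A ∪ (L.take i).toFinset) e := fun i hi => by
    by_contra h
    exact Nat.find_min hex hi h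
  have hsub : A ∪ (L.take j).toFinset ⊆ A ∪ L.toFinset := by
    apply Finset.union_subset_union_right
    intro f hf
    rw [List.mem_toFinset] at hf ⊢
    exact List.mem_of_mem_take hf
  have hnot : ¬ G.IsCapMatching C (insert e (A ∪ (L.take j).toFinset)) := fun h =>
    hjn ⟨heD, fun h' => heM (hsub h'), h⟩
  unfold GraphEdges.IsCapMatching at hnot
  push Not at hnot
  obtain ⟨v, hv⟩ := hnot
  have hle : ((A ∪ (L.take j).toFinset).filter (fun f => v ∈ G.ends f)).card ≤ C v :=
    (Finset.card_le_card (Finset.filter_subset_filter _ hsub)).trans (hM v)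
  rw [Finset.filter_insert] at hv
  split_ifs at hv with hve
  · have hfull : C v ≤ ((A ∪ (L.take j).toFinset).filter (fun f => v ∈ G.ends f)).card := by
      have := Finset.card_insert_le e ((A ∪ (L.take j).toFinset).filter (fun f => v ∈ G.ends f))
      omega
    refine ⟨v, hve, hfull.trans (Finset.card_le_card (Finset.filter_subset_filter _ hsub)), ?_⟩
    intro f hf hvf
    obtain ⟨i, hi, rfl⟩ := List.getElem_of_mem hf
    have hLi := hL.1 ⟨i, hi⟩
    simp only [List.get_eq_getElem] at hLi
    by_cases hij : i < j
    · exact hLi.2 e (hjm i hij)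
    · exfalso
      have hsub2 : A ∪ (L.take j).toFinset ⊆ A ∪ (L.take i).toFinset := by
        apply Finset.union_subset_union_right
        intro f hf
        rw [List.mem_toFinset] at hf ⊢
        exact (List.take_subset_take_left L (by omega)) hf
      have hcap := hLi.1.2.2 v
      rw [Finset.filter_insert, if_pos hvf, Finset.card_insert_of_notMem] at hcap
      · have := Finset.card_le_card (Finset.filter_subset_filter (fun f => v ∈ G.ends f) hsub2)
        omega
      · intro h
        exact hLi.1.2.1 (Finset.mem_of_mem_filter _ h)
  · omega

/-- Edges first tried by `alg` in round `s`, untried by `sm` before, and blocked at a vertex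
half-full with new edges of at least the same probability. -/
noncomputable def blockedNew [DecidableEq V] [DecidableEq E] (G : GraphEdges V E) (C : V → ℕ)
    (p : E → ℝ) (sm alg : (E → Bool) → ℕ → Finset E) (ω : E → Bool) (s : ℕ) : Finset E :=
  open Classical in
  (newEdges alg ω s).filter (fun e => e ∉ selectedBefore sm ω s ∧
    ∃ v ∈ G.ends e, C v ≤ 2 * ((newEdges sm ω s).filter (fun f => v ∈ G.ends f)).card ∧
      ∀ f ∈ newEdges sm ω s, v ∈ G.ends f → p e ≤ p f)

lemma mem_blockedNew [DecidableEq V] [DecidableEq E] (G : GraphEdges V E) (C : V → ℕ)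
    (p : E → ℝ) (sm alg : (E → Bool) → ℕ → Finset E) (ω : E → Bool) (s : ℕ) (e : E) :
    e ∈ blockedNew G C p sm alg ω s ↔ e ∈ newEdges alg ω s ∧ e ∉ selectedBefore sm ω s ∧
    ∃ v ∈ G.ends e, C v ≤ 2 * ((newEdges sm ω s).filter (fun f => v ∈ G.ends f)).card ∧
      ∀ f ∈ newEdges sm ω s, v ∈ G.ends f → p e ≤ p f := by
  simp only [blockedNew, mem_filter]

lemma sum_blockedNew_le [DecidableEq V] [Fintype E] [DecidableEq E] (G : GraphEdges V E)
    (C : V → ℕ) (p : E → ℝ) (hp : ∀ e, 0 ≤ p e ∧ p e ≤ 1)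
    (sm alg : (E → Bool) → ℕ → Finset E) (halg : G.IsOnlineCap C alg)
    (ω : E → Bool) (s : ℕ) :
    ∑ e ∈ blockedNew G C p sm alg ω s, p e ≤ 4 * ∑ f ∈ newEdges sm ω s, p f := by
  classical
  set X := blockedNew G C p sm alg ω s with hX
  set N := newEdges sm ω s with hN
  let Q : V → E → Prop := fun v e => v ∈ G.ends e ∧
      C v ≤ 2 * (N.filter (fun f => v ∈ G.ends f)).card ∧ ∀ f ∈ N, v ∈ G.ends f → p e ≤ p f
  have h1 : ∑ e ∈ X, p e ≤ ∑ v ∈ univ.biUnion G.ends, ∑ e ∈ X.filter (Q v), p e := by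
    simp_rw [Finset.sum_filter]
    rw [Finset.sum_comm]
    apply Finset.sum_le_sum
    intro e he
    obtain ⟨-, -, v, hv, hq⟩ := (mem_blockedNew G C p sm alg ω s e).1 he
    have hQ : Q v e := ⟨hv, hq⟩
    have := Finset.single_le_sum (s := univ.biUnion G.ends)
      (f := fun v => if Q v e then p e else 0)
      (fun v _ => by split_ifs; exacts [(hp e).1, le_rfl])
      (Finset.mem_biUnion.2 ⟨e, mem_univ e, hv⟩)
    simpa [hQ] using this
  have h2 : ∀ v, ∑ e ∈ X.filter (Q v), p e ≤
      ∑ f ∈ N.filter (fun f => v ∈ G.ends f), 2 * p f := by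
    intro v
    rcases (X.filter (Q v)).eq_empty_or_nonempty with h | h
    · rw [h, Finset.sum_empty]
      exact Finset.sum_nonneg fun f _ => by linarith [(hp f).1]
    · obtain ⟨m, hm, hmax⟩ := Finset.exists_max_image _ p h
      have hmQ : Q v m := (Finset.mem_filter.1 hm).2
      have ha : ∑ e ∈ X.filter (Q v), p e ≤ (X.filter (Q v)).card • p m :=
        Finset.sum_le_card_nsmul _ _ _ hmax
      have hb : (N.filter (fun f => v ∈ G.ends f)).card • (2 * p m) ≤
          ∑ f ∈ N.filter (fun f => v ∈ G.ends f), 2 * p f := by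
        apply Finset.card_nsmul_le_sum
        intro f hf
        rw [Finset.mem_filter] at hf
        linarith [hmQ.2.2 f hf.1 hf.2]
      have hc : (X.filter (Q v)).card ≤ C v := by
        refine le_trans (Finset.card_le_card ?_) (halg.1 ω s v)
        intro e he
        rw [Finset.mem_filter] at he ⊢
        have := ((mem_blockedNew G C p sm alg ω s e).1 he.1).1
        exact ⟨(Finset.mem_sdiff.1 this).1, he.2.1⟩
      have hd : ((X.filter (Q v)).card : ℝ) ≤
          2 * ((N.filter (fun f => v ∈ G.ends f)).card : ℝ) := by
        exact_mod_cast hc.trans hmQ.2.1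
      rw [nsmul_eq_mul] at ha hb
      nlinarith [mul_le_mul_of_nonneg_right hd (hp m).1]
  calc _ ≤ _ := h1
    _ ≤ ∑ v ∈ univ.biUnion G.ends, ∑ f ∈ N.filter (fun f => v ∈ G.ends f), 2 * p f :=
        Finset.sum_le_sum fun v _ => h2 v
    _ = _ := by rw [sum_vertices, ← Finset.mul_sum]; ring

lemma card_half_le [DecidableEq V] [Fintype E] [DecidableEq E] (G : GraphEdges V E)
    (C : V → ℕ) (M S Y : Finset E) (hM : G.IsCapMatching C M) (hYM : Y ⊆ M)
    (hY : ∀ e ∈ Y, ∃ v ∈ G.ends e, C v ≤ 2 * (S.filter (fun f => v ∈ G.ends f)).card) :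
    (Y.card : ℝ) ≤ 4 * S.card := by
  classical
  let W := (univ.biUnion G.ends).filter
    (fun v => C v ≤ 2 * (S.filter (fun f => v ∈ G.ends f)).card)
  have h1 : Y ⊆ W.biUnion (fun v => M.filter (fun f => v ∈ G.ends f)) := by
    intro e he
    obtain ⟨v, hv, h⟩ := hY e he
    rw [Finset.mem_biUnion]
    exact ⟨v, Finset.mem_filter.2 ⟨Finset.mem_biUnion.2 ⟨e, mem_univ _, hv⟩, h⟩,
      Finset.mem_filter.2 ⟨hYM he, hv⟩⟩
  have h2 : Y.card ≤ ∑ v ∈ univ.biUnion G.ends, 2 * (S.filter (fun f => v ∈ G.ends f)).card := by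
    calc Y.card ≤ _ := Finset.card_le_card h1
      _ ≤ ∑ v ∈ W, (M.filter (fun f => v ∈ G.ends f)).card := Finset.card_biUnion_le
      _ ≤ ∑ v ∈ W, 2 * (S.filter (fun f => v ∈ G.ends f)).card :=
        Finset.sum_le_sum fun v hv => (hM v).trans (Finset.mem_filter.1 hv).2
      _ ≤ _ := Finset.sum_le_sum_of_subset (Finset.filter_subset _ _)
  have h3 := sum_vertices G S (fun _ => (1 : ℝ))
  simp only [Finset.sum_const, nsmul_eq_mul, mul_one] at h3
  have h4 : (Y.card : ℝ) ≤ ∑ v ∈ univ.biUnion G.ends,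
      2 * ((S.filter (fun f => v ∈ G.ends f)).card : ℝ) := by exact_mod_cast h2
  rw [← Finset.mul_sum, h3] at h4
  linarith

/-- Successful edges tried by `sm` up to round `t` are kept at round `t`. -/
lemma sm_keeps [DecidableEq V] [DecidableEq E] {G : GraphEdges V E} {C : V → ℕ} {p : E → ℝ}
    {sm : (E → Bool) → ℕ → Finset E} (hsm : G.IsSMCap C p sm) (ω : E → Bool) (s t : ℕ)
    (hst : s ≤ t) (e : E) (he : e ∈ sm ω s) (hω : ω e = true) : e ∈ sm ω t := by
  rcases hst.eq_or_lt with rfl | h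
  · exact he
  · obtain ⟨L, -, hL⟩ := hsm.2 ω t
    rw [hL, Finset.mem_union]
    left
    rw [Finset.mem_filter]
    exact ⟨(mem_selectedBefore _ _ _ _).2 ⟨s, h, he⟩, hω⟩

/-- Blocking in round `s` of `sm`. -/
lemma sm_block [DecidableEq V] [DecidableEq E] {G : GraphEdges V E} {C : V → ℕ} {p : E → ℝ}
    {sm : (E → Bool) → ℕ → Finset E} (hsm : G.IsSMCap C p sm) (ω : E → Bool) (s : ℕ)
    (e : E) (he : e ∉ selectedBefore sm ω s) (hes : e ∉ sm ω s) :
    ∃ v ∈ G.ends e,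
      (C v ≤ 2 * (((selectedBefore sm ω s).filter (fun f => ω f)).filter
        (fun f => v ∈ G.ends f)).card ∨
       C v ≤ 2 * ((newEdges sm ω s).filter (fun f => v ∈ G.ends f)).card) ∧
      ∀ f ∈ newEdges sm ω s, v ∈ G.ends f → p e ≤ p f := by
  obtain ⟨L, hL, hsel⟩ := hsm.2 ω s
  have hM := hsm.1.1 ω s
  rw [hsel] at hM hes
  obtain ⟨v, hv, hfull, hmax⟩ := greedy_block G C p _ _ L hL hM e
    (fun h => he (Finset.mem_of_mem_filter _ h)) hes
  have hnewL : ∀ f ∈ newEdges sm ω s, f ∈ L := by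
    intro f hf
    rw [newEdges, Finset.mem_sdiff, hsel, Finset.mem_union] at hf
    rcases hf.1 with h | h
    · exact absurd (Finset.mem_of_mem_filter _ h) hf.2
    · simpa using h
  have hLnew : L.toFinset ⊆ newEdges sm ω s := by
    intro f hf
    rw [newEdges, Finset.mem_sdiff]
    refine ⟨by rw [hsel]; exact Finset.mem_union_right _ hf, fun hb => ?_⟩
    obtain ⟨i, hi, rfl⟩ := List.getElem_of_mem (List.mem_toFinset.1 hf)
    have hLi := (hL.1 ⟨i, hi⟩).1
    simp only [List.get_eq_getElem] at hLi
    by_cases hω : ω L[i] = true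
    · exact hLi.2.1 (Finset.mem_union_left _ (Finset.mem_filter.2 ⟨hb, hω⟩))
    · exact hLi.1 (Finset.mem_filter.2 ⟨hb, hω⟩)
  refine ⟨v, hv, ?_, fun f hf hvf => hmax f (hnewL f hf) hvf⟩
  rw [Finset.filter_union] at hfull
  have h1 := hfull.trans (Finset.card_union_le _ _)
  have h2 := Finset.card_le_card (Finset.filter_subset_filter (fun f => v ∈ G.ends f) hLnew)
  omega

/-- Pointwise charging. -/
lemma pointwise_charge [DecidableEq V] [Fintype E] [DecidableEq E] {G : GraphEdges V E}
    {C : V → ℕ} {p : E → ℝ} {sm alg : (E → Bool) → ℕ → Finset E} (hsm : G.IsSMCap C p sm)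
    (halg : G.IsOnlineCap C alg) (ω : E → Bool) (t : ℕ) :
    (((alg ω t).filter (fun e => ω e)).card : ℝ) ≤
      5 * (((sm ω t).filter (fun e => ω e)).card : ℝ) +
      ∑ s ∈ range (t + 1),
        (((blockedNew G C p sm alg ω s).filter (fun e => ω e)).card : ℝ) := by
  classical
  set S := (sm ω t).filter (fun e => ω e) with hS
  let Y := (alg ω t).filter
    (fun e => ∃ v ∈ G.ends e, C v ≤ 2 * (S.filter (fun f => v ∈ G.ends f)).card)
  let Z := (range (t + 1)).biUnion
    (fun s => (blockedNew G C p sm alg ω s).filter (fun e => ω e))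
  have hsub : (alg ω t).filter (fun e => ω e) ⊆ (S ∪ Y) ∪ Z := by
    intro e he
    rw [Finset.mem_filter] at he
    have hex : ∃ s, e ∈ alg ω s := ⟨t, he.1⟩
    set s := Nat.find hex with hs
    have hes : e ∈ alg ω s := Nat.find_spec hex
    have hst : s ≤ t := Nat.find_min' hex he.1
    have hnb : e ∉ selectedBefore alg ω s := by
      rw [mem_selectedBefore]
      rintro ⟨r, hr, h⟩
      exact Nat.find_min hex hr h
    by_cases h1 : e ∈ S
    · exact Finset.mem_union_left _ (Finset.mem_union_left _ h1)
    have h2 : ∀ r ≤ s, e ∉ sm ω r := fun r hr h =>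
      h1 (Finset.mem_filter.2 ⟨sm_keeps hsm ω r t (hr.trans hst) e h he.2, he.2⟩)
    have h3 : e ∉ selectedBefore sm ω s := by
      rw [mem_selectedBefore]
      rintro ⟨r, hr, h⟩
      exact h2 r hr.le h
    obtain ⟨v, hv, hor, hmax⟩ := sm_block hsm ω s e h3 (h2 s le_rfl)
    rcases hor with h | h
    · refine Finset.mem_union_left _ (Finset.mem_union_right _ ?_)
      refine Finset.mem_filter.2 ⟨he.1, v, hv, h.trans ?_⟩
      apply Nat.mul_le_mul_left
      apply Finset.card_le_card
      apply Finset.filter_subset_filter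
      intro f hf
      rw [Finset.mem_filter, mem_selectedBefore] at hf
      obtain ⟨⟨r, hr, hfr⟩, hω⟩ := hf
      exact Finset.mem_filter.2 ⟨sm_keeps hsm ω r t (by omega) f hfr hω, hω⟩
    · refine Finset.mem_union_right _ ?_
      refine Finset.mem_biUnion.2 ⟨s, by simpa using Nat.lt_succ_of_le hst, ?_⟩
      refine Finset.mem_filter.2 ⟨?_, he.2⟩
      rw [mem_blockedNew]
      exact ⟨Finset.mem_sdiff.2 ⟨hes, hnb⟩, h3, v, hv, h, hmax⟩
  have hY : (Y.card : ℝ) ≤ 4 * S.card :=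
    card_half_le G C (alg ω t) S Y (halg.1 ω t) (Finset.filter_subset _ _)
      (fun e he => (Finset.mem_filter.1 he).2)
  have hZ : Z.card ≤ ∑ s ∈ range (t + 1),
      ((blockedNew G C p sm alg ω s).filter (fun e => ω e)).card := Finset.card_biUnion_le
  have hc := (Finset.card_le_card hsub).trans (Finset.card_union_le _ _)
  have hd := Finset.card_union_le S Y
  have hZ' : (Z.card : ℝ) ≤ ∑ s ∈ range (t + 1),
      (((blockedNew G C p sm alg ω s).filter (fun e => ω e)).card : ℝ) := by exact_mod_cast hZ
  have hc' : (((alg ω t).filter (fun e => ω e)).card : ℝ) ≤ S.card + Y.card + Z.card := by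
    exact_mod_cast (by omega)
  linarith

lemma sum_new_le [DecidableEq V] [Fintype E] [DecidableEq E] {G : GraphEdges V E}
    {C : V → ℕ} {p : E → ℝ} {sm : (E → Bool) → ℕ → Finset E} (hsm : G.IsSMCap C p sm)
    (ω : E → Bool) (t : ℕ) :
    ∑ s ∈ range (t + 1), (((newEdges sm ω s).filter (fun e => ω e)).card : ℝ) ≤
      (((sm ω t).filter (fun e => ω e)).card : ℝ) := by
  have h : ∑ s ∈ range (t + 1), ((newEdges sm ω s).filter (fun e => ω e)).card ≤
      ((sm ω t).filter (fun e => ω e)).card := by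
    rw [← Finset.card_biUnion]
    · apply Finset.card_le_card
      intro e he
      rw [Finset.mem_biUnion] at he
      obtain ⟨s, hs, he⟩ := he
      rw [Finset.mem_filter] at he ⊢
      rw [Finset.mem_range] at hs
      exact ⟨sm_keeps hsm ω s t (by omega) e (Finset.mem_sdiff.1 he.1).1 he.2, he.2⟩
    · have key : ∀ a b : ℕ, a < b → Disjoint ((newEdges sm ω a).filter (fun e => ω e))
          ((newEdges sm ω b).filter (fun e => ω e)) := by
        intro a b hab
        rw [Finset.disjoint_left]
        intro e h1 h2
        have h1 := (Finset.mem_sdiff.1 (Finset.mem_of_mem_filter _ h1)).1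
        have h2 := (Finset.mem_sdiff.1 (Finset.mem_of_mem_filter _ h2)).2
        exact h2 ((mem_selectedBefore _ _ _ _).2 ⟨a, hab, h1⟩)
      intro a _ b _ hab
      rcases lt_or_gt_of_ne hab with h | h
      · exact key a b h
      · exact (key b a h).symm
  exact_mod_cast h

/-- The per-round bound, with constant `9`. -/
lemma round_bound [DecidableEq V] [Fintype E] [DecidableEq E] {G : GraphEdges V E}
    {C : V → ℕ} {p : E → ℝ} (hp : ∀ e, 0 ≤ p e ∧ p e ≤ 1)
    {sm alg : (E → Bool) → ℕ → Finset E} (hsm : G.IsSMCap C p sm)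
    (halg : G.IsOnlineCap C alg) (t : ℕ) :
    ∑ ω : E → Bool, probOf p ω * (((alg ω t).filter (fun e => ω e)).card : ℝ) ≤
      9 * ∑ ω : E → Bool, probOf p ω * (((sm ω t).filter (fun e => ω e)).card : ℝ) := by
  have hP := probOf_nonneg p hp
  have hX : ∀ s, ∑ ω : E → Bool, probOf p ω *
      (((blockedNew G C p sm alg ω s).filter (fun e => ω e)).card : ℝ) ≤
      4 * ∑ ω : E → Bool, probOf p ω *
        (((newEdges sm ω s).filter (fun e => ω e)).card : ℝ) := by
    intro s
    rw [sum_card_indep p (fun ω => blockedNew G C p sm alg ω s),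
      sum_card_indep p (fun ω => newEdges sm ω s), Finset.mul_sum]
    · apply Finset.sum_le_sum
      intro ω _
      have := mul_le_mul_of_nonneg_left (sum_blockedNew_le G C p hp sm alg halg ω s) (hP ω)
      linarith
    · intro ω e b he
      have h := (Finset.mem_sdiff.1 he).2
      rw [online_update_new hsm.1 ω e b s h]
      exact he
    · intro ω e b he
      rw [mem_blockedNew] at he ⊢
      rw [online_update_new hsm.1 ω e b s he.2.1, online_update_before hsm.1 ω e b s he.2.1,
        online_update_new halg ω e b s (Finset.mem_sdiff.1 he.1).2]
      exact he
  have h1 : ∑ ω : E → Bool, probOf p ω * (((alg ω t).filter (fun e => ω e)).card : ℝ) ≤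
      5 * ∑ ω : E → Bool, probOf p ω * (((sm ω t).filter (fun e => ω e)).card : ℝ) +
      ∑ s ∈ range (t + 1), ∑ ω : E → Bool, probOf p ω *
        (((blockedNew G C p sm alg ω s).filter (fun e => ω e)).card : ℝ) := by
    rw [Finset.sum_comm, Finset.mul_sum, ← Finset.sum_add_distrib]
    apply Finset.sum_le_sum
    intro ω _
    rw [← Finset.mul_sum]
    have := mul_le_mul_of_nonneg_left (pointwise_charge hsm halg ω t) (hP ω)
    linarith
  have h2 : ∑ s ∈ range (t + 1), ∑ ω : E → Bool, probOf p ω *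
        (((newEdges sm ω s).filter (fun e => ω e)).card : ℝ) ≤
      ∑ ω : E → Bool, probOf p ω * (((sm ω t).filter (fun e => ω e)).card : ℝ) := by
    rw [Finset.sum_comm]
    apply Finset.sum_le_sum
    intro ω _
    rw [← Finset.mul_sum]
    exact mul_le_mul_of_nonneg_left (sum_new_le hsm ω t) (hP ω)
  have h3 := Finset.sum_le_sum (fun s (_ : s ∈ range (t + 1)) => hX s)
  rw [← Finset.mul_sum] at h3
  linarith

lemma expectedReward_eq [Fintype E] [DecidableEq E] (p : E → ℝ) (w : ℕ → ℝ)
    (T : ℕ) (select : (E → Bool) → ℕ → Finset E) :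
    expectedReward p w T select = ∑ t ∈ range T, w t *
      ∑ ω : E → Bool, probOf p ω * (((select ω t).filter (fun e => ω e)).card : ℝ) := by
  unfold expectedReward
  simp_rw [Finset.mul_sum]
  rw [Finset.sum_comm]
  refine Finset.sum_congr rfl fun t _ => Finset.sum_congr rfl fun ω _ => ?_
  ring

/-- In the capacitated model with positive integer
capacities, every capacitated stable matching process is a
`1/11`-approximation to every online algorithm. -/
theorem smCap_approximates_opt
    {V E : Type} [DecidableEq V] [Fintype E] [DecidableEq E]
    (G : GraphEdges V E) (C : V → ℕ) (hC : ∀ v, 0 < C v)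
    (p : E → ℝ) (hp : ∀ e, 0 ≤ p e ∧ p e ≤ 1)
    (T : ℕ) (w : ℕ → ℝ) (hw : ∀ t, 0 ≤ w t)
    (sm alg : (E → Bool) → ℕ → Finset E)
    (hsm : G.IsSMCap C p sm) (halg : G.IsOnlineCap C alg) :
    (1 / 11 : ℝ) * expectedReward p w T alg ≤ expectedReward p w T sm := by
  rw [expectedReward_eq, expectedReward_eq, Finset.mul_sum]
  apply Finset.sum_le_sum
  intro t _
  have h1 := mul_le_mul_of_nonneg_left (round_bound hp hsm halg t) (hw t)
  have h2 : 0 ≤ w t * ∑ ω : E → Bool,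
      probOf p ω * (((sm ω t).filter (fun e => ω e)).card : ℝ) :=
    mul_nonneg (hw t) (Finset.sum_nonneg fun ω _ =>
      mul_nonneg (probOf_nonneg p hp ω) (Nat.cast_nonneg _))
  linarith
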